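/- arXiv:math/0411615 — 8 statements merged into one kernel-verified Lean document; each statement's English description precedes it below -/
import Mathlib

section
/- There exists a constant C = C(α, φ, z₀) ∈ (0, ∞) such that for every p ≥ α and every z > 0 one has z^p ≤ C^p · exp(h*(p)) · N(z). -/
/-!
The constant `C = 1` works. For `w ≥ 1`, the Fenchel–Young inequality
`p * y - h y ≤ hstar p` at `y = log w` exponentiates to `w ^ p ≤ exp (hstar p) * exp (φ w)`,
which is the claim when `z > z₀`. When `z ≤ z₀`, write `z ^ p = z₀ ^ p * (z / z₀) ^ p`, apply the
same inequality at `w = z₀`, and use `(z / z₀) ^ p ≤ (z / z₀) ^ α`, valid because `z / z₀ ≤ 1`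
and `α ≤ p`.
-/

open Real Set

/-- There exists a constant `C = C(α, φ, z₀) ∈ (0, ∞)` such that for every
`p ≥ α` and every `z > 0` one has `z^p ≤ C^p · exp(h*(p)) · N(z)`. -/
theorem stmt_0
    (α : ℝ) (hα : 1 ≤ α)
    (φ h hstar : ℝ → ℝ)
    (hh : ∀ y ≥ (0 : ℝ), h y = φ (Real.exp y))
    (hφcont : ContinuousOn φ (Set.Ici 1))
    (hmono : StrictMonoOn h (Set.Ici 0))
    (hconv : ConvexOn ℝ (Set.Ici 0) h)
    (hsuper : Filter.Tendsto (fun y => h y / y) Filter.atTop Filter.atTop)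
    (hstar_def : ∀ p ≥ α, IsLUB {r : ℝ | ∃ y ≥ (0 : ℝ), r = p * y - h y} (hstar p))
    (z₀ : ℝ) (hz₀ : 1 ≤ z₀)
    (N : ℝ → ℝ)
    (hN₁ : ∀ z ∈ Set.Icc (0 : ℝ) z₀, N z = Real.exp (φ z₀) * (z / z₀) ^ α)
    (hN₂ : ∀ z, z₀ < z → N z = Real.exp (φ z)) :
    ∃ C : ℝ, 0 < C ∧
      ∀ p ≥ α, ∀ z > (0 : ℝ), z ^ p ≤ C ^ p * Real.exp (hstar p) * N z := by
  -- Fenchel–Young at `y = log w`, exponentiated.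
  have key : ∀ p ≥ α, ∀ w ≥ (1 : ℝ), w ^ p ≤ Real.exp (hstar p) * Real.exp (φ w) := by
    intro p hp w hw
    have hw0 : 0 < w := by linarith
    have hy : 0 ≤ Real.log w := Real.log_nonneg hw
    have hle := (hstar_def p hp).1 ⟨Real.log w, hy, rfl⟩
    rw [hh _ hy, Real.exp_log hw0] at hle
    rw [Real.rpow_def_of_pos hw0, ← Real.exp_add]
    apply Real.exp_le_exp.2
    linarith [mul_comm p (Real.log w)]
  refine ⟨1, one_pos, fun p hp z hz => ?_⟩
  rw [Real.one_rpow, one_mul]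
  have hz0 : 0 < z₀ := by linarith
  rcases le_or_gt z z₀ with hle | hlt
  · rw [hN₁ z ⟨hz.le, hle⟩]
    have hpos : 0 < z / z₀ := div_pos hz hz0
    calc z ^ p = z₀ ^ p * (z / z₀) ^ p := by
          rw [← Real.mul_rpow hz0.le hpos.le, mul_div_cancel₀ z hz0.ne']
      _ ≤ (Real.exp (hstar p) * Real.exp (φ z₀)) * (z / z₀) ^ α :=
          mul_le_mul (key p hp z₀ hz₀)
            (Real.rpow_le_rpow_of_exponent_ge hpos ((div_le_one hz0).2 hle) hp)
            (by positivity) (by positivity)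
      _ = _ := mul_assoc _ _ _
  · rw [hN₂ z hlt]
    exact key p hp z (by linarith)
end

section
/- There exists a constant C = C(α, φ, z₀) ∈ (0, ∞) such that: if f : ℝ → ℝ is measurable and ∫_ℝ N(|f(x)|) dx ≤ 1 (Lebesgue measure), then for every p ≥ α one has (∫_ℝ |f(x)|^p dx)^{1/p} ≤ C · ψ(p). -/
/-!
The claim holds with `C = 1`, because of the pointwise inequality `z ^ p ≤ exp (h* p) * N z` for
all `z ≥ 0` and `p ≥ α`. At `z = exp y ≥ 1`, the Fenchel-Young inequality `p * y ≤ h* p + h y`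
reads `z ^ p ≤ exp (h* p) * exp (φ z)`, which is the claim for `z > z₀`. For `z ≤ z₀` the
homogeneity `z ^ p = z₀ ^ p * (z / z₀) ^ p`, the bound `(z / z₀) ^ p ≤ (z / z₀) ^ α` and the
Fenchel-Young inequality at `z₀` give it. Integrating and taking `p`-th roots finishes the proof.
-/


open Real Set MeasureTheory

/-- There exists a constant `C = C(α, φ, z₀) ∈ (0, ∞)` such that: if
`f : ℝ → ℝ` is measurable and `∫_ℝ N(|f(x)|) dx ≤ 1` (Lebesgue measure), then for every
`p ≥ α` one has `(∫_ℝ |f(x)|^p dx)^{1/p} ≤ C · ψ(p)`, where `ψ(p) = exp(h*(p)/p)`. -/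
theorem stmt_1
    (α : ℝ) (hα : 1 ≤ α)
    (φ h hstar : ℝ → ℝ)
    (hh : ∀ y ≥ (0 : ℝ), h y = φ (Real.exp y))
    (hφcont : ContinuousOn φ (Set.Ici 1))
    (hmono : StrictMonoOn h (Set.Ici 0))
    (hconv : ConvexOn ℝ (Set.Ici 0) h)
    (hsuper : Filter.Tendsto (fun y => h y / y) Filter.atTop Filter.atTop)
    (hstar_def : ∀ p ≥ α, IsLUB {r : ℝ | ∃ y ≥ (0 : ℝ), r = p * y - h y} (hstar p))
    (z₀ : ℝ) (hz₀ : 1 ≤ z₀)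
    (N : ℝ → ℝ)
    (hN₁ : ∀ z ∈ Set.Icc (0 : ℝ) z₀, N z = Real.exp (φ z₀) * (z / z₀) ^ α)
    (hN₂ : ∀ z, z₀ < z → N z = Real.exp (φ z)) :
    ∃ C : ℝ, 0 < C ∧
      ∀ f : ℝ → ℝ, Measurable f →
        (∫⁻ x : ℝ, ENNReal.ofReal (N |f x|)) ≤ 1 →
        ∀ p ≥ α,
          (∫⁻ x : ℝ, (‖f x‖₊ : ENNReal) ^ p) ^ (1 / p)
            ≤ ENNReal.ofReal (C * Real.exp (hstar p / p)) := by
  have young : ∀ p ≥ α, ∀ z : ℝ, 1 ≤ z → z ^ p ≤ exp (hstar p) * exp (φ z) := by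
    intro p hp z hz
    have hz0 : 0 < z := by linarith
    have hy : 0 ≤ log z := log_nonneg hz
    have h1 : p * log z - h (log z) ≤ hstar p := (hstar_def p hp).1 ⟨log z, hy, rfl⟩
    rw [hh _ hy, exp_log hz0] at h1
    rw [rpow_def_of_pos hz0, ← exp_add]
    exact exp_le_exp.2 (by linarith)
  have key : ∀ p ≥ α, ∀ z : ℝ, 0 ≤ z → z ^ p ≤ exp (hstar p) * N z := by
    intro p hp z hz
    have hz₀' : 0 < z₀ := by linarith
    rcases le_or_gt z z₀ with hle | hlt
    · rw [hN₁ z ⟨hz, hle⟩, ← mul_assoc]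
      have hq0 : 0 ≤ z / z₀ := by positivity
      have hq1 : z / z₀ ≤ 1 := (div_le_one hz₀').2 hle
      calc z ^ p = z₀ ^ p * (z / z₀) ^ p := by
            rw [← mul_rpow hz₀'.le hq0, mul_div_cancel₀ _ hz₀'.ne']
        _ ≤ (exp (hstar p) * exp (φ z₀)) * (z / z₀) ^ α := by
            refine mul_le_mul (young p hp z₀ hz₀) ?_ (by positivity) (by positivity)
            -- `α > 0` makes the comparison of powers valid also at `z = 0`.
            exact rpow_le_rpow_of_exponent_ge_of_imp hq0 hq1 hp
              (fun _ h0 => by linarith)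
    · rw [hN₂ z hlt]
      exact young p hp z (by linarith)
  refine ⟨1, one_pos, fun f _ hf p hp => ?_⟩
  have hp0 : 0 < p := by linarith
  have hint : (∫⁻ x : ℝ, (‖f x‖₊ : ENNReal) ^ p) ≤ ENNReal.ofReal (exp (hstar p)) := by
    calc (∫⁻ x : ℝ, (‖f x‖₊ : ENNReal) ^ p)
        ≤ ∫⁻ x : ℝ, ENNReal.ofReal (exp (hstar p)) * ENNReal.ofReal (N |f x|) := by
          refine lintegral_mono fun x => ?_
          rw [← ENNReal.ofReal_mul (exp_pos _).le, ← enorm_eq_nnnorm,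
            Real.enorm_eq_ofReal_abs, ENNReal.ofReal_rpow_of_nonneg (abs_nonneg _) hp0.le]
          exact ENNReal.ofReal_le_ofReal (key p hp _ (abs_nonneg _))
      _ = ENNReal.ofReal (exp (hstar p)) * ∫⁻ x : ℝ, ENNReal.ofReal (N |f x|) :=
          lintegral_const_mul' _ _ ENNReal.ofReal_ne_top
      _ ≤ ENNReal.ofReal (exp (hstar p)) := mul_le_of_le_one_right' hf
  calc (∫⁻ x : ℝ, (‖f x‖₊ : ENNReal) ^ p) ^ (1 / p)
      ≤ ENNReal.ofReal (exp (hstar p)) ^ (1 / p) :=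
        ENNReal.rpow_le_rpow hint (by positivity)
    _ = ENNReal.ofReal (1 * exp (hstar p / p)) := by
        rw [ENNReal.ofReal_rpow_of_nonneg (exp_pos _).le (by positivity), ← exp_mul, one_mul,
          mul_one_div]
end

section
/- Suppose f : ℝ → ℝ is measurable and satisfies ∫_ℝ |f(x)|^p dx ≤ exp(h*(p)) for every p ≥ α. Then there exists w₀ ≥ 1 such that for every w ≥ w₀ the Lebesgue measure of the set {x ∈ ℝ : |f(x)| > w} is at most exp(−h(log w)). -/
/-!
Markov's inequality with exponent `p` gives, for `y = log w`,
`vol {|f| > w} ≤ exp (-(p * y)) * exp (h* p)`. Since `h` is convex, it has a supporting line at each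
`y > 0` (`exists_subgradient`); when `p` is its slope, `h* p = p * y - h y` and the bound becomes
`exp (-h y)`. This `p` is an admissible exponent once `y` is large: it is at least the secant slope
`(h y - h 0) / y`, which tends to infinity by superlinearity of `h`.
-/

open Real Set MeasureTheory

/-- A convex function on `[0, ∞)` has a supporting line at every interior point. -/
lemma exists_subgradient {h : ℝ → ℝ} (hconv : ConvexOn ℝ (Set.Ici 0) h) {y : ℝ} (hy : 0 < y) :
    ∃ p : ℝ, ∀ z ≥ 0, h y + p * (z - y) ≤ h z := by
  have hyi : y ∈ interior (Set.Ici (0 : ℝ)) := by simpa using hy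
  refine ⟨derivWithin h (Set.Ioi y) y, fun z hz => ?_⟩
  rcases lt_trichotomy z y with hzy | rfl | hzy
  · have h1 := (hconv.slope_le_leftDeriv_of_mem_interior hz hyi hzy).trans
      (hconv.leftDeriv_le_rightDeriv_of_mem_interior hyi)
    rw [slope_def_field, div_le_iff₀ (by linarith)] at h1
    linarith
  · simp
  · have h1 := hconv.rightDeriv_le_slope_of_mem_interior hyi hz hzy
    rw [slope_def_field, le_div_iff₀ (by linarith)] at h1
    linarith

/-- Markov's inequality for `|f| ^ p` at a level written as `w = exp y`. -/
lemma exp_mul_volume_le_lintegral {f : ℝ → ℝ} (hf : Measurable f) {p : ℝ} (hp : 0 ≤ p) (y : ℝ) :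
    ENNReal.ofReal (Real.exp (p * y)) * volume {x : ℝ | Real.exp y < |f x|}
      ≤ ∫⁻ x : ℝ, (‖f x‖₊ : ENNReal) ^ p := by
  refine le_trans ?_ (mul_meas_ge_le_lintegral
    (f := fun x => (‖f x‖₊ : ENNReal) ^ p) (by fun_prop) (ENNReal.ofReal (Real.exp (p * y))))
  refine mul_le_mul_right (measure_mono ?_) _
  intro x hx
  rw [Set.mem_ofPred_eq, mul_comm, Real.exp_mul, ← ENNReal.ofReal_rpow_of_pos (Real.exp_pos y)]
  refine ENNReal.rpow_le_rpow ?_ hp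
  rw [← enorm_eq_nnnorm, ← ofReal_norm, Real.norm_eq_abs]
  exact ENNReal.ofReal_le_ofReal hx.le

/-- Suppose `f : ℝ → ℝ` is measurable and satisfies
`∫_ℝ |f(x)|^p dx ≤ exp(h*(p))` for every `p ≥ α`. Then there exists `w₀ ≥ 1` such that for
every `w ≥ w₀` the Lebesgue measure of the set `{x ∈ ℝ : |f(x)| > w}` is at most
`exp(−h(log w))`. -/
theorem stmt_2
    (α : ℝ) (hα : 1 ≤ α)
    (h hstar : ℝ → ℝ)
    (hcont : ContinuousOn h (Set.Ici 0))
    (hmono : StrictMonoOn h (Set.Ici 0))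
    (hconv : ConvexOn ℝ (Set.Ici 0) h)
    (hsuper : Filter.Tendsto (fun y => h y / y) Filter.atTop Filter.atTop)
    (hstar_def : ∀ p ≥ α, IsLUB {r : ℝ | ∃ y ≥ (0 : ℝ), r = p * y - h y} (hstar p))
    (f : ℝ → ℝ) (hf : Measurable f)
    (hfp : ∀ p ≥ α, (∫⁻ x : ℝ, (‖f x‖₊ : ENNReal) ^ p) ≤ ENNReal.ofReal (Real.exp (hstar p))) :
    ∃ w₀ ≥ (1 : ℝ), ∀ w ≥ w₀,
      volume {x : ℝ | w < |f x|} ≤ ENNReal.ofReal (Real.exp (-h (Real.log w))) := by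
  obtain ⟨Y, hY⟩ := Filter.eventually_atTop.1
    (hsuper.eventually_ge_atTop (α + |h 0|))
  -- For `y = log w ≥ 1` one has `|h 0| / y ≤ |h 0|`, so the secant slope from `0` is at least `α`.
  refine ⟨Real.exp (max Y 1), Real.one_le_exp (by positivity), fun w hw => ?_⟩
  have hw0 : 0 < w := (Real.exp_pos _).trans_le hw
  obtain ⟨y, rfl⟩ : ∃ y, w = Real.exp y := ⟨Real.log w, (Real.exp_log hw0).symm⟩
  have hyY := max_le_iff.1 (Real.exp_le_exp.1 hw)
  have hy0 : 0 < y := by linarith [hyY.2]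
  rw [Real.log_exp]
  obtain ⟨p, hp⟩ := exists_subgradient hconv hy0
  have hpα : α ≤ p := by
    have h1 := hY y hyY.1
    rw [le_div_iff₀ hy0] at h1
    have h2 := hp 0 le_rfl
    have h3 : |h 0| ≤ |h 0| * y := le_mul_of_one_le_right (abs_nonneg _) hyY.2
    refine le_of_mul_le_mul_right ?_ hy0
    linarith [le_abs_self (h 0)]
  have hstar_le : hstar p ≤ p * y - h y := by
    refine (hstar_def p hpα).2 ?_
    rintro r ⟨z, hz, rfl⟩
    linarith [hp z hz]
  have key := (exp_mul_volume_le_lintegral hf (by linarith : 0 ≤ p) y).trans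
    ((hfp p hpα).trans (ENNReal.ofReal_le_ofReal (Real.exp_le_exp.2 hstar_le)))
  rw [sub_eq_add_neg, Real.exp_add, ENNReal.ofReal_mul (Real.exp_pos _).le] at key
  exact (ENNReal.mul_le_mul_iff_right
    (ENNReal.ofReal_pos.2 (Real.exp_pos _)).ne' ENNReal.ofReal_ne_top).1 key
end

section
/- (Theorem 4) Suppose ∑_{k=3}^∞ exp(h(k) − h(k+1)) < ∞. Then there exist constants 0 < C₃ ≤ C₄ < ∞ depending only on α, φ, z₀ such that for every measurable f : ℝ → ℝ one has C₃·‖f‖_G ≤ ‖f‖_{L(N)} ≤ C₄·‖f‖_G, where either side may be infinite (and is infinite exactly when the other is). -/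
/-!
Both inequalities compare `N` with powers pointwise, through Young's inequality
`p * y - h y ≤ hstar p`.

*Lower bound.* For every `p ≥ α` and `z ≥ 0` one has `z ^ p ≤ exp (hstar p) * N z`
(`rpow_le_exp_mul_N`), so `∫ N (|f| / k) ≤ 1` gives `‖f‖_p ≤ k * ψ p`, and `C₃ = 1` works.

*Upper bound.* Scale so that `∫ g ^ p ≤ exp (hstar p)` for all `p ≥ α`, where `g = |f| / K`, and put
`C = exp (c + 5)` with `c` a natural number. Where `g / C ≤ z₀`, `N (g / C)` is a multiple of
`(g / C) ^ α`. Elsewhere, if `exp m ≤ g / C < exp (m + 1)`, then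
`N (g / C) ≤ exp (h (m + 1)) * (g / (C * exp m)) ^ p` for any `p ≥ 0`. Taking for `p` the increment
of `h` over `[m + c + 3, m + c + 4]`, which is at least `α` for large `c` by superlinearity,
convexity bounds `hstar p` (`hstar_increment_le`) and the integral of the `m`-th bound is at most
`exp (h (m + 1) - h (m + c + 4)) ≤ exp (-c * (h 1 - h 0)) * exp (h (m + 3) - h (m + 4))`.
These are summable in `m` by hypothesis, and the total tends to `0` as `c → ∞`.
-/

open Real Set MeasureTheory

/-- The Luxemburg (Orlicz) norm `‖f‖_{L(N)} = inf{k > 0 : ∫_ℝ N(|f(x)|/k) dx ≤ 1}`,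
valued in `[0,∞]` (with `inf ∅ = ∞`). -/
noncomputable def luxemburgNorm (N : ℝ → ℝ) (f : ℝ → ℝ) : ENNReal :=
  sInf (ENNReal.ofReal ''
    {k : ℝ | 0 < k ∧ (∫⁻ x : ℝ, ENNReal.ofReal (N (|f x| / k))) ≤ 1})

/-- The moment norm `‖f‖_G = sup_{p ≥ α} ‖f‖_p / ψ(p)`, where `ψ(p) = exp(h*(p)/p)`,
valued in `[0,∞]`. -/
noncomputable def momentNorm (α : ℝ) (hstar : ℝ → ℝ) (f : ℝ → ℝ) : ENNReal :=
  ⨆ p : {p : ℝ // α ≤ p},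
    eLpNorm f (ENNReal.ofReal p.1) volume / ENNReal.ofReal (Real.exp (hstar p.1 / p.1))

/-- The bound on one term of the moment norm, rewritten as a bound on the moment of the scaled
function. -/
lemma eLpNorm_div_le_iff {p K : ℝ} (hp : 0 < p) (hK : 0 < K) (s : ℝ) (f : ℝ → ℝ) :
    eLpNorm f (ENNReal.ofReal p) volume / ENNReal.ofReal (Real.exp (s / p)) ≤ ENNReal.ofReal K ↔
      ∫⁻ x, ENNReal.ofReal ((|f x| / K) ^ p) ≤ ENNReal.ofReal (Real.exp s) := by
  have hint : ∫⁻ x, ENNReal.ofReal ((|f x| / K) ^ p)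
      = (∫⁻ x, ‖f x‖ₑ ^ p) / ENNReal.ofReal (K ^ p) := by
    have hKp : 0 < K ^ p := Real.rpow_pos_of_pos hK p
    rw [ENNReal.div_eq_inv_mul, ← lintegral_const_mul' _ _
      (ENNReal.inv_ne_top.2 (ENNReal.ofReal_pos.2 hKp).ne')]
    refine lintegral_congr fun x => ?_
    rw [Real.div_rpow (abs_nonneg _) hK.le, ENNReal.ofReal_div_of_pos hKp,
      ENNReal.div_eq_inv_mul, ← ENNReal.ofReal_rpow_of_nonneg (abs_nonneg _) hp.le,
      ← Real.norm_eq_abs, ofReal_norm]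
  have hs : Real.exp s = Real.exp (s / p) ^ p := by
    rw [← Real.exp_mul, div_mul_cancel₀ _ hp.ne']
  rw [hint, eLpNorm_eq_lintegral_rpow_enorm_toReal (by simpa using hp) ENNReal.ofReal_ne_top,
    ENNReal.toReal_ofReal hp.le]
  rw [ENNReal.div_le_iff (by simp [Real.exp_pos]) ENNReal.ofReal_ne_top,
    ENNReal.div_le_iff (by simp [Real.rpow_pos_of_pos hK p]) ENNReal.ofReal_ne_top,
    one_div, ENNReal.rpow_inv_le_iff hp, hs,
    ← ENNReal.ofReal_mul hK.le, ← ENNReal.ofReal_mul (by positivity),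
    ENNReal.ofReal_rpow_of_nonneg (by positivity) hp.le,
    Real.mul_rpow hK.le (Real.exp_pos _).le, mul_comm]

/-- The pointwise form of Young's inequality behind the lower bound. -/
lemma rpow_le_exp_mul_N {α p z₀ z : ℝ} {φ h hstar N : ℝ → ℝ}
    (hα : 1 ≤ α) (hp : α ≤ p)
    (hh : ∀ y ≥ (0 : ℝ), h y = φ (Real.exp y))
    (young : ∀ y ≥ (0 : ℝ), p * y - h y ≤ hstar p)
    (hz₀ : 1 ≤ z₀)
    (hN₁ : ∀ z ∈ Set.Icc (0 : ℝ) z₀, N z = Real.exp (φ z₀) * (z / z₀) ^ α)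
    (hN₂ : ∀ z, z₀ < z → N z = Real.exp (φ z)) (hz : 0 ≤ z) :
    z ^ p ≤ Real.exp (hstar p) * N z := by
  have key : ∀ w, 1 ≤ w → w ^ p ≤ Real.exp (hstar p) * Real.exp (φ w) := by
    intro w hw
    have hw0 : 0 < w := by linarith
    have h1 := young (Real.log w) (Real.log_nonneg hw)
    rw [hh _ (Real.log_nonneg hw), Real.exp_log hw0] at h1
    rw [Real.rpow_def_of_pos hw0, ← Real.exp_add]
    exact Real.exp_le_exp.2 (by linarith)
  have hz0 : 0 < z₀ := by linarith
  rcases le_or_gt z z₀ with hle | hlt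
  · rw [hN₁ z ⟨hz, hle⟩, ← mul_assoc]
    have h1 : z ^ p = z₀ ^ p * (z / z₀) ^ p := by
      rw [← Real.mul_rpow hz0.le (by positivity), mul_div_cancel₀ _ hz0.ne']
    rw [h1]
    have h2 : (z / z₀) ^ p ≤ (z / z₀) ^ α :=
      Real.rpow_le_rpow_of_exponent_ge' (by positivity) ((div_le_one hz0).2 hle)
        (by linarith) hp
    exact mul_le_mul (key z₀ hz₀) h2 (by positivity) (by positivity)
  · rw [hN₂ z hlt]
    exact key z (by linarith)

section Increments

variable {h : ℝ → ℝ}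

lemma increment_mono (hconv : ConvexOn ℝ (Set.Ici 0) h) {a b : ℝ} (ha : 0 ≤ a) (hab : a ≤ b) :
    h (a + 1) - h a ≤ h (b + 1) - h b := by
  rcases hab.eq_or_lt with rfl | hlt
  · exact le_rfl
  have h1 := hconv.secant_mono (a := a) (x := a + 1) (y := b + 1) ha
    (by simp; linarith) (by simp; linarith) (by linarith) (by linarith) (by linarith)
  have h2 := hconv.secant_mono (a := b + 1) (x := a) (y := b) (by simp; linarith)
    (by simp; linarith) (by simp; linarith) (by linarith) (by linarith) (by linarith)
  have e1 : (h (a + 1) - h a) / (a + 1 - a) = h (a + 1) - h a := by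
    rw [add_sub_cancel_left, div_one]
  have e2 : (h b - h (b + 1)) / (b - (b + 1)) = h (b + 1) - h b := by
    rw [sub_add_cancel_left, div_neg, div_one, neg_sub]
  have e3 : (h (b + 1) - h a) / (b + 1 - a) = (h a - h (b + 1)) / (a - (b + 1)) := by
    rw [← neg_sub (h a), ← neg_sub a, neg_div_neg_eq]
  rw [e1, e3] at h1
  rw [e2] at h2
  linarith

/-- The chord over `[a, a + 1]`, lowered by its own slope, is a global minorant of `h`. -/
lemma slope_mul_sub_le (hmono : StrictMonoOn h (Set.Ici 0)) (hconv : ConvexOn ℝ (Set.Ici 0) h)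
    {a y : ℝ} (ha : 0 ≤ a) (hy : 0 ≤ y) :
    (h (a + 1) - h a) * y - h y ≤ (h (a + 1) - h a) * (a + 1) - h a := by
  have hd : 0 < h (a + 1) - h a :=
    sub_pos.2 (hmono ha (by simp; linarith) (by linarith))
  rcases lt_or_ge y a with hya | hya
  · have h1 := hconv.secant_mono (a := a) (x := y) (y := a + 1) ha hy (by simp; linarith)
      hya.ne (by linarith) (by linarith)
    rw [add_sub_cancel_left, div_one, div_le_iff_of_neg (by linarith)] at h1
    nlinarith
  rcases le_or_gt y (a + 1) with hy1 | hy1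
  · have h1 : h a ≤ h y := hmono.monotoneOn ha hy hya
    nlinarith
  · have h1 := hconv.secant_mono (a := a) (x := a + 1) (y := y) ha (by simp; linarith) hy
      (by linarith) (by linarith) hy1.le
    rw [add_sub_cancel_left, div_one, le_div_iff₀ (by linarith)] at h1
    nlinarith

lemma hstar_increment_le (hmono : StrictMonoOn h (Set.Ici 0)) (hconv : ConvexOn ℝ (Set.Ici 0) h)
    {a s : ℝ} (ha : 0 ≤ a)
    (hs : IsLUB {r : ℝ | ∃ y ≥ (0 : ℝ), r = (h (a + 1) - h a) * y - h y} s) :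
    s ≤ (h (a + 1) - h a) * (a + 1) - h a := by
  refine hs.2 ?_
  rintro r ⟨y, hy, rfl⟩
  exact slope_mul_sub_le hmono hconv ha hy

lemma add_mul_increment_le (hconv : ConvexOn ℝ (Set.Ici 0) h) {a : ℝ} (ha : 0 ≤ a) (c : ℕ) :
    h a + c * (h 1 - h 0) ≤ h (a + c) := by
  induction c with
  | zero => simp
  | succ c ih =>
    have h1 := increment_mono hconv le_rfl (b := a + c) (by positivity)
    rw [zero_add] at h1
    push_cast
    rw [← add_assoc]
    linarith

/-- Superlinear growth forces the increments of `h` to exceed `α`: otherwise `h n ≤ h 0 + α * n`. -/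
lemma exists_le_increment (hconv : ConvexOn ℝ (Set.Ici 0) h)
    (hsuper : Filter.Tendsto (fun y => h y / y) Filter.atTop Filter.atTop) (α : ℝ) :
    ∃ n₀ : ℕ, ∀ y : ℝ, (n₀ : ℝ) ≤ y → α ≤ h (y + 1) - h y := by
  suffices H : ∃ n₀ : ℕ, α ≤ h ((n₀ : ℝ) + 1) - h n₀ by
    obtain ⟨n₀, hn⟩ := H
    exact ⟨n₀, fun y hy => hn.trans (increment_mono hconv (Nat.cast_nonneg _) hy)⟩
  by_contra! hcon
  have hlin : ∀ n : ℕ, h n ≤ h 0 + α * n := by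
    intro n
    induction n with
    | zero => simp
    | succ n ih =>
      have := hcon n
      push_cast
      linarith
  have ht := hsuper.comp (tendsto_natCast_atTop_atTop (R := ℝ))
  obtain ⟨n, hn, hn1⟩ := ((ht.eventually_gt_atTop (|h 0| + α)).and
    (Filter.eventually_ge_atTop 1)).exists
  have hn1' : (1 : ℝ) ≤ n := by exact_mod_cast hn1
  simp only [Function.comp_apply] at hn
  rw [lt_div_iff₀ (by linarith)] at hn
  have := hlin n
  nlinarith [le_abs_self (h 0), abs_nonneg (h 0)]

end Increments

/-- The pointwise bound behind the upper estimate. The `m`-th term of the series dominates `N w`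
for `exp m ≤ w < exp (m + 1)`; the exponents `q m` are free. -/
lemma ofReal_N_le {α z₀ w : ℝ} {φ h N : ℝ → ℝ} {q : ℕ → ℝ}
    (hh : ∀ y ≥ (0 : ℝ), h y = φ (Real.exp y))
    (hmono : StrictMonoOn h (Set.Ici 0)) (hz₀ : 1 ≤ z₀)
    (hN₁ : ∀ z ∈ Set.Icc (0 : ℝ) z₀, N z = Real.exp (φ z₀) * (z / z₀) ^ α)
    (hN₂ : ∀ z, z₀ < z → N z = Real.exp (φ z)) (hq : ∀ m, 0 ≤ q m) (hw : 0 ≤ w) :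
    ENNReal.ofReal (N w) ≤ ENNReal.ofReal (Real.exp (φ z₀) * (w / z₀) ^ α) +
      ∑' m : ℕ, ENNReal.ofReal (Real.exp (h (m + 1)) * (w / Real.exp m) ^ q m) := by
  rcases le_or_gt w z₀ with hle | hlt
  · rw [hN₁ w ⟨hw, hle⟩]
    exact le_self_add
  · have hw1 : 1 ≤ w := by linarith
    have hw0 : 0 < w := by linarith
    have hl : 0 ≤ Real.log w := Real.log_nonneg hw1
    refine le_trans ?_ (le_trans (ENNReal.le_tsum ⌊Real.log w⌋₊) le_add_self)
    refine ENNReal.ofReal_le_ofReal ?_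
    rw [hN₂ w hlt]
    have h1 : φ w ≤ h ((⌊Real.log w⌋₊ : ℝ) + 1) := by
      have : φ w = h (Real.log w) := by rw [hh _ hl, Real.exp_log hw0]
      rw [this]
      exact hmono.monotoneOn hl (by simp; positivity) (Nat.lt_floor_add_one _).le
    have h2 : 1 ≤ w / Real.exp (⌊Real.log w⌋₊ : ℝ) := by
      rw [one_le_div (Real.exp_pos _), ← Real.le_log_iff_exp_le hw0]
      exact Nat.floor_le hl
    calc Real.exp (φ w) ≤ Real.exp (h ((⌊Real.log w⌋₊ : ℝ) + 1)) := Real.exp_le_exp.2 h1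
      _ ≤ _ := le_mul_of_one_le_right (Real.exp_pos _).le (Real.one_le_rpow h2 (hq _))

lemma lintegral_moment_le {p K b D s : ℝ} {f : ℝ → ℝ}
    (hK : 0 < K) (hb : 0 ≤ b) (hD : 0 < D)
    (hf : ∫⁻ x, ENNReal.ofReal ((|f x| / K) ^ p) ≤ ENNReal.ofReal (Real.exp s)) :
    ∫⁻ x, ENNReal.ofReal (b * (|f x| / K / D) ^ p) ≤
      ENNReal.ofReal (b * D ^ (-p) * Real.exp s) := by
  have hbD : 0 ≤ b * D ^ (-p) := by positivity
  rw [ENNReal.ofReal_mul hbD]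
  refine le_trans (le_of_eq ?_) (mul_le_mul_right hf _)
  rw [← lintegral_const_mul' _ _ ENNReal.ofReal_ne_top]
  refine lintegral_congr fun x => ?_
  rw [← ENNReal.ofReal_mul hbD, Real.div_rpow (by positivity) hD.le, Real.rpow_neg hD.le,
    div_eq_mul_inv]
  congr 1
  ring

/-- Theorem 4: Suppose `∑_{k=3}^∞ exp(h(k) − h(k+1)) < ∞`. Then there exist
constants `0 < C₃ ≤ C₄ < ∞` depending only on `α, φ, z₀` such that for every measurable
`f : ℝ → ℝ` one has `C₃·‖f‖_G ≤ ‖f‖_{L(N)} ≤ C₄·‖f‖_G` (either side may be infinite,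
and is infinite exactly when the other is). -/
theorem stmt_4
    (α : ℝ) (hα : 1 ≤ α)
    (φ h hstar : ℝ → ℝ)
    (hh : ∀ y ≥ (0 : ℝ), h y = φ (Real.exp y))
    (hφcont : ContinuousOn φ (Set.Ici 1))
    (hmono : StrictMonoOn h (Set.Ici 0))
    (hconv : ConvexOn ℝ (Set.Ici 0) h)
    (hsuper : Filter.Tendsto (fun y => h y / y) Filter.atTop Filter.atTop)
    (hstar_def : ∀ p ≥ α, IsLUB {r : ℝ | ∃ y ≥ (0 : ℝ), r = p * y - h y} (hstar p))
    (z₀ : ℝ) (hz₀ : 1 ≤ z₀)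
    (N : ℝ → ℝ)
    (hN₁ : ∀ z ∈ Set.Icc (0 : ℝ) z₀, N z = Real.exp (φ z₀) * (z / z₀) ^ α)
    (hN₂ : ∀ z, z₀ < z → N z = Real.exp (φ z))
    (hsum : Summable (fun k : ℕ => Real.exp (h (k + 3) - h (k + 4)))) :
    ∃ C₃ C₄ : ℝ, 0 < C₃ ∧ C₃ ≤ C₄ ∧
      ∀ f : ℝ → ℝ, Measurable f →
        ENNReal.ofReal C₃ * momentNorm α hstar f ≤ luxemburgNorm N f ∧
        luxemburgNorm N f ≤ ENNReal.ofReal C₄ * momentNorm α hstar f := by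
  have young : ∀ p ≥ α, ∀ y ≥ (0 : ℝ), p * y - h y ≤ hstar p :=
    fun p hp y hy => (hstar_def p hp).1 ⟨y, hy, rfl⟩
  set δ := h 1 - h 0 with hδ
  have hδ0 : 0 < δ := sub_pos.2 (hmono (by simp) (by simp) zero_lt_one)
  set S := ∑' k : ℕ, Real.exp (h (k + 3) - h (k + 4)) with hS
  set A := Real.exp (φ z₀) * Real.exp (hstar α) with hA
  have hz0 : 0 < z₀ := by linarith
  -- `B c` bounds `∫ N (|f| / (K * exp (c + 5)))` whenever the moment norm of `f` is at most `K`.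
  let B : ℕ → ℝ := fun c => A * (Real.exp (c + 5) * z₀) ^ (-α) + Real.exp (-(c * δ)) * S
  have hB : Filter.Tendsto B Filter.atTop (nhds 0) := by
    have hc := tendsto_natCast_atTop_atTop (R := ℝ)
    have t1 : Filter.Tendsto (fun c : ℕ => (Real.exp (c + 5) * z₀) ^ (-α)) Filter.atTop
        (nhds 0) :=
      (tendsto_rpow_neg_atTop (by linarith : 0 < α)).comp
        ((Real.tendsto_exp_atTop.comp
          (Filter.tendsto_atTop_add_const_right _ 5 hc)).atTop_mul_const hz0)
    have t2 : Filter.Tendsto (fun c : ℕ => Real.exp (-(c * δ))) Filter.atTop (nhds 0) :=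
      Real.tendsto_exp_neg_atTop_nhds_zero.comp (hc.atTop_mul_const hδ0)
    simpa using (t1.const_mul A).add (t2.mul_const S)
  obtain ⟨n₀, hn₀⟩ := exists_le_increment hconv hsuper α
  obtain ⟨c, hcB, hcn⟩ := ((hB.eventually_lt_const zero_lt_one).and
    (Filter.eventually_ge_atTop n₀)).exists
  have hcn' : (n₀ : ℝ) ≤ c := by exact_mod_cast hcn
  set C := Real.exp (c + 5) with hC
  have hC0 : 0 < C := Real.exp_pos _
  refine ⟨1, C, one_pos, Real.one_le_exp (by positivity), fun f hf => ⟨?_, ?_⟩⟩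
  · rw [ENNReal.ofReal_one, one_mul]
    refine le_sInf ?_
    rintro _ ⟨k, ⟨hk, hk1⟩, rfl⟩
    refine iSup_le ?_
    rintro ⟨p, hp⟩
    rw [eLpNorm_div_le_iff (by linarith) hk]
    calc ∫⁻ x, ENNReal.ofReal ((|f x| / k) ^ p)
        ≤ ∫⁻ x, ENNReal.ofReal (Real.exp (hstar p)) * ENNReal.ofReal (N (|f x| / k)) := by
          refine lintegral_mono fun x => ?_
          rw [← ENNReal.ofReal_mul (Real.exp_pos _).le]
          exact ENNReal.ofReal_le_ofReal
            (rpow_le_exp_mul_N hα hp hh (young p hp) hz₀ hN₁ hN₂ (by positivity))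
      _ = ENNReal.ofReal (Real.exp (hstar p)) * ∫⁻ x, ENNReal.ofReal (N (|f x| / k)) :=
          lintegral_const_mul' _ _ ENNReal.ofReal_ne_top
      _ ≤ ENNReal.ofReal (Real.exp (hstar p)) := mul_le_of_le_one_right' hk1
  have main : ∀ K : ℝ, 0 < K → momentNorm α hstar f ≤ ENNReal.ofReal K →
      luxemburgNorm N f ≤ ENNReal.ofReal C * ENNReal.ofReal K := by
    intro K hK hfK
    have hmom : ∀ p ≥ α,
        ∫⁻ x, ENNReal.ofReal ((|f x| / K) ^ p) ≤ ENNReal.ofReal (Real.exp (hstar p)) :=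
      fun p hp => (eLpNorm_div_le_iff (by linarith) hK _ f).1 ((le_iSup_iff.2
        fun b hb => hb ⟨p, hp⟩ : _ ≤ momentNorm α hstar f).trans hfK)
    rw [← ENNReal.ofReal_mul hC0.le]
    refine sInf_le ⟨C * K, ⟨by positivity, ?_⟩, rfl⟩
    let q : ℕ → ℝ := fun m => h ((m + c + 3 : ℝ) + 1) - h (m + c + 3)
    have hqα : ∀ m, α ≤ q m := fun m =>
      hn₀ _ (by have := Nat.cast_nonneg (α := ℝ) m; linarith)
    have hq0 : ∀ m, 0 ≤ q m := fun m => by linarith [hqα m]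
    have hterm : ∀ m : ℕ, ∫⁻ x, ENNReal.ofReal
        (Real.exp (h (m + 1)) * (|f x| / K / C / Real.exp m) ^ q m) ≤
        ENNReal.ofReal (Real.exp (-(c * δ)) * Real.exp (h (m + 3) - h (m + 4))) := by
      intro m
      have hm : (0 : ℝ) ≤ m := Nat.cast_nonneg m
      have hc0 : (0 : ℝ) ≤ c := Nat.cast_nonneg c
      have h1 := lintegral_moment_le (b := Real.exp (h (m + 1))) (D := C * Real.exp m)
        hK (Real.exp_pos _).le (by positivity) (hmom (q m) (hqα m))
      simp only [div_div (_ / K)]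
      refine h1.trans (ENNReal.ofReal_le_ofReal ?_)
      rw [hC, ← Real.exp_add, ← Real.exp_mul, ← Real.exp_add, ← Real.exp_add, ← Real.exp_add]
      refine Real.exp_le_exp.2 ?_
      have h2 : hstar (q m) ≤ q m * (m + c + 3 + 1) - h (m + c + 3) :=
        hstar_increment_le hmono hconv (by positivity) (hstar_def (q m) (hqα m))
      have h3 := add_mul_increment_le hconv (a := m + 4) (by positivity) c
      have h4 : h (m + 1) ≤ h (m + 3) :=
        hmono.monotoneOn (by simp; linarith) (by simp; linarith) (by linarith)
      have h5 : q m = h (m + 4 + c) - h (m + c + 3) := by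
        simp only [q]
        ring_nf
      rw [← hδ] at h3
      nlinarith
    calc ∫⁻ x, ENNReal.ofReal (N (|f x| / (C * K)))
        ≤ ∫⁻ x, (ENNReal.ofReal (Real.exp (φ z₀) * (|f x| / K / C / z₀) ^ α) +
          ∑' m : ℕ, ENNReal.ofReal
            (Real.exp (h (m + 1)) * (|f x| / K / C / Real.exp m) ^ q m)) := by
          refine lintegral_mono fun x => ?_
          rw [mul_comm C K, ← div_div]
          exact ofReal_N_le hh hmono hz₀ hN₁ hN₂ hq0 (by positivity)
      _ = (∫⁻ x, ENNReal.ofReal (Real.exp (φ z₀) * (|f x| / K / C / z₀) ^ α)) +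
          ∑' m : ℕ, ∫⁻ x, ENNReal.ofReal
            (Real.exp (h (m + 1)) * (|f x| / K / C / Real.exp m) ^ q m) := by
          rw [lintegral_add_left (by fun_prop), lintegral_tsum fun m => by fun_prop]
      _ ≤ ENNReal.ofReal (A * (C * z₀) ^ (-α)) +
          ∑' m : ℕ, ENNReal.ofReal
            (Real.exp (-(c * δ)) * Real.exp (h (m + 3) - h (m + 4))) := by
          refine add_le_add ?_ (ENNReal.tsum_le_tsum hterm)
          have h1 := lintegral_moment_le (b := Real.exp (φ z₀)) (D := C * z₀)
            hK (Real.exp_pos _).le (by positivity) (hmom α le_rfl)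
          simp only [div_div (_ / K)]
          refine h1.trans (le_of_eq ?_)
          rw [hA]
          ring_nf
      _ = ENNReal.ofReal (B c) := by
          rw [← ENNReal.ofReal_tsum_of_nonneg (fun m => by positivity) (hsum.mul_left _),
            tsum_mul_left, ← ENNReal.ofReal_add (by positivity)
              (mul_nonneg (Real.exp_pos _).le (tsum_nonneg fun m => (Real.exp_pos _).le))]
      _ ≤ 1 := ENNReal.ofReal_le_one.2 hcB.le
  have hCne : ENNReal.ofReal C ≠ 0 := (ENNReal.ofReal_pos.2 hC0).ne'
  rw [mul_comm, ← ENNReal.div_le_iff hCne ENNReal.ofReal_ne_top]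
  -- Enlarging `K` slightly above the moment norm keeps it positive even when the norm vanishes.
  refine ENNReal.le_of_forall_pos_le_add fun ε hε hfin => ?_
  have hKeq : ENNReal.ofReal ((momentNorm α hstar f).toReal + ε) = momentNorm α hstar f + ε := by
    rw [ENNReal.ofReal_add ENNReal.toReal_nonneg ε.coe_nonneg, ENNReal.ofReal_toReal hfin.ne,
      ENNReal.ofReal_coe_nnreal]
  rw [ENNReal.div_le_iff hCne ENNReal.ofReal_ne_top, mul_comm, ← hKeq]
  refine main _ (add_pos_of_nonneg_of_pos ENNReal.toReal_nonneg hε) ?_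
  rw [hKeq]
  exact le_self_add
end

section
/- Let α ≥ 1, m > 0, and let f : ℝ → ℝ be measurable. Then sup_{p ≥ α} p^{−1/m}·‖f‖_p < ∞ if and only if there exists ε > 0 such that ∫_{{x : |f(x)| ≤ 1}} |f(x)|^α dx < ∞ and ∫_{{x : |f(x)| > 1}} exp(ε·|f(x)|^m) dx < ∞. -/
/-!
Write `I p = ∫ |f|^p`, so that `‖f‖_p = (I p)^{1/p}`.

If `‖f‖_p ≤ C p^{1/m}` for all `p ≥ α`, then `p = α` gives integrability of `|f|^α`. For the
exponential integral, expand `exp (ε |f|^m) = ∑ ε^k |f|^{mk} / k!` and fix an integer `n` with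
`m n ≥ α`. On `{|f| > 1}` we have `|f|^{mk} ≤ |f|^{m(k+n)}`, where the exponent `m(k+n)` is
admissible, so `I (m(k+n)) ≤ (m C^m)^{k+n} (k+n)^{k+n}`. Since `j^j ≤ e^j j!` and
`(k+n)! ≤ 2^{k+n} k! n!`, the `k`-th term is at most `n! ε^k D^{k+n}` with `D = 2 e m C^m`, and the
series is geometric for small `ε` (`term_bound`).

Conversely, raising `ε s / q ≤ exp (ε s / q)` to the power `q` gives
`s^q ≤ (q / ε)^q exp (ε s)`. With `s = |f|^m` and `q = p / m`, this bounds `|f|^p` on `{|f| > 1}`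
by `(p / (m ε))^{p/m} exp (ε |f|^m)` (`rpow_le_const_mul_exp`), while on `{|f| ≤ 1}` we have
`|f|^p ≤ |f|^α`. Taking `p`-th roots yields the bound `‖f‖_p ≤ (1 + A) + K p^{1/m} (1 + B)`, where
`A`, `B` are the two given integrals and `K = (1 / (m ε))^{1/m}`.
-/

open Real Set MeasureTheory

lemma enorm_rpow_eq_ofReal (t p : ℝ) (hp : 0 ≤ p) :
    (‖t‖ₑ : ENNReal) ^ p = ENNReal.ofReal (|t| ^ p) := by
  rw [Real.enorm_eq_ofReal_abs, ENNReal.ofReal_rpow_of_nonneg (abs_nonneg _) hp]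

lemma eLpNorm_ofReal_eq (f : ℝ → ℝ) (p : ℝ) (hp : 0 < p) :
    eLpNorm f (ENNReal.ofReal p) volume
      = (∫⁻ x, ENNReal.ofReal (|f x| ^ p)) ^ (1 / p) := by
  rw [eLpNorm_eq_lintegral_rpow_enorm_toReal (by simpa using hp) ENNReal.ofReal_ne_top,
    ENNReal.toReal_ofReal hp.le]
  simp_rw [enorm_rpow_eq_ofReal _ p hp.le]

lemma ofReal_exp_eq_tsum (y : ℝ) (hy : 0 ≤ y) :
    ENNReal.ofReal (Real.exp y) = ∑' k : ℕ, ENNReal.ofReal (y ^ k / (k.factorial : ℝ)) := by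
  rw [← ENNReal.ofReal_tsum_of_nonneg (fun k => by positivity)
    (Real.summable_pow_div_factorial y), Real.exp_eq_exp_ℝ, NormedSpace.exp_eq_tsum_div]

/-- The elementary inequality `s^q ≤ (q / ε)^q e^{ε s}` with `s = t^m`, `q = p / m`. -/
lemma rpow_le_const_mul_exp (t p m ε : ℝ) (ht : 0 < t) (hp : 0 < p) (hm : 0 < m) (hε : 0 < ε) :
    t ^ p ≤ (p / (m * ε)) ^ (p / m) * Real.exp (ε * t ^ m) := by
  have hs : 0 < t ^ m := Real.rpow_pos_of_pos ht m
  have hq : 0 < p / m := by positivity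
  have h1 : ε * t ^ m / (p / m) ≤ Real.exp (ε * t ^ m / (p / m)) := by
    linarith [Real.add_one_le_exp (ε * t ^ m / (p / m))]
  have h2 : (ε * t ^ m / (p / m)) ^ (p / m) ≤ Real.exp (ε * t ^ m) := by
    calc _ ≤ (Real.exp (ε * t ^ m / (p / m))) ^ (p / m) :=
          Real.rpow_le_rpow (by positivity) h1 hq.le
      _ = _ := by rw [← Real.exp_mul]; congr 1; field_simp
  calc t ^ p = (t ^ m) ^ (p / m) := by
        rw [← Real.rpow_mul ht.le]; congr 1; field_simp
    _ = ((p / (m * ε)) * (ε * t ^ m / (p / m))) ^ (p / m) := by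
        congr 1; field_simp
    _ = (p / (m * ε)) ^ (p / m) * (ε * t ^ m / (p / m)) ^ (p / m) :=
        Real.mul_rpow (by positivity) (by positivity)
    _ ≤ _ := by gcongr

/-- Stirling-type bound that makes the shifted exponential series geometric: `j^j ≤ e^j j!` with
`j = k + n`, together with `(k + n)! ≤ 2^{k+n} k! n!`. -/
lemma pow_self_le_factorials (k n : ℕ) :
    ((k + n : ℕ) : ℝ) ^ (k + n)
      ≤ (2 * Real.exp 1) ^ (k + n) * (k.factorial * n.factorial : ℝ) := by
  have h1 := Real.pow_div_factorial_le_exp ((k + n : ℕ) : ℝ) (by positivity) (k + n)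
  rw [div_le_iff₀ (by positivity)] at h1
  have h2 : (((k + n).factorial : ℕ) : ℝ) ≤ 2 ^ (k + n) * (k.factorial * n.factorial : ℝ) := by
    have h3 : (k + n).factorial ≤ 2 ^ (k + n) * (k.factorial * n.factorial) := by
      rw [← Nat.add_choose_mul_factorial_mul_factorial k n, mul_assoc]
      exact Nat.mul_le_mul_right _ (Nat.choose_le_two_pow _ _)
    exact_mod_cast h3
  calc _ ≤ Real.exp ((k + n : ℕ) : ℝ) * (((k + n).factorial : ℕ) : ℝ) := h1
    _ ≤ Real.exp ((k + n : ℕ) : ℝ) * (2 ^ (k + n) * (k.factorial * n.factorial : ℝ)) := by gcongr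
    _ = _ := by
        rw [mul_pow, ← Real.exp_nat_mul, mul_one]; ring

/-- Bound on the `k`-th term of the exponential series: the real number multiplying `ε^k / k!` is
the moment bound `(C p^{1/m})^p` at `p = m (k + n)`. -/
lemma term_bound (C m ε : ℝ) (hC : 0 ≤ C) (hm : 0 < m) (hε : 0 ≤ ε) (k n : ℕ) :
    ε ^ k / (k.factorial : ℝ) *
        (C * (m * (k + n : ℕ)) ^ (1 / m)) ^ (m * ((k + n : ℕ) : ℝ))
      ≤ (n.factorial * (2 * Real.exp 1 * m * C ^ m) ^ n) *
        (ε * (2 * Real.exp 1 * m * C ^ m)) ^ k := by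
  have hCm : 0 ≤ C ^ m := Real.rpow_nonneg hC m
  have h1 : (C * (m * (k + n : ℕ)) ^ (1 / m)) ^ (m * ((k + n : ℕ) : ℝ))
      = (C ^ m * m) ^ (k + n) * ((k + n : ℕ) : ℝ) ^ (k + n) := by
    rw [Real.rpow_mul (by positivity), Real.rpow_natCast,
      Real.mul_rpow hC (by positivity), ← Real.rpow_mul (by positivity),
      one_div_mul_cancel hm.ne', Real.rpow_one, ← mul_pow, mul_assoc]
  rw [h1]
  calc _ ≤ ε ^ k / (k.factorial : ℝ) * ((C ^ m * m) ^ (k + n) *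
        ((2 * Real.exp 1) ^ (k + n) * (k.factorial * n.factorial : ℝ))) := by
        gcongr
        exact pow_self_le_factorials k n
    _ = _ := by
        have : (k.factorial : ℝ) ≠ 0 := by positivity
        field_simp
        ring

lemma rpow_one_div_le_one_add (A : ENNReal) (p : ℝ) (hp : 1 ≤ p) : A ^ (1 / p) ≤ 1 + A := by
  have h0 : 0 ≤ 1 / p := by positivity
  have h1 : 1 / p ≤ 1 := by rw [div_le_one (by linarith)]; exact hp
  calc A ^ (1 / p) ≤ (1 + A) ^ (1 / p) := ENNReal.rpow_le_rpow le_add_self h0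
    _ ≤ (1 + A) ^ (1 : ℝ) := ENNReal.rpow_le_rpow_of_exponent_le le_self_add h1
    _ = _ := ENNReal.rpow_one _

/-- The exponential integral is finite for some `ε > 0` if all moments of order `p ≥ α` are at most
`(C p^{1/m})^p`. -/
lemma exists_exp_integral_lt_top (α m C : ℝ) (hm : 0 < m) (hC : 0 ≤ C)
    (f : ℝ → ℝ) (hf : Measurable f)
    (h : ∀ p, α ≤ p → ∫⁻ x, ENNReal.ofReal (|f x| ^ p)
      ≤ ENNReal.ofReal ((C * p ^ (1 / m)) ^ p)) :
    ∃ ε > (0 : ℝ),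
      (∫⁻ x in {x : ℝ | 1 < |f x|}, ENNReal.ofReal (Real.exp (ε * |f x| ^ m))) < ⊤ := by
  obtain ⟨n, hn⟩ := exists_nat_ge (α / m)
  rw [div_le_iff₀ hm] at hn
  have hCm : 0 ≤ C ^ m := Real.rpow_nonneg hC m
  set D : ℝ := 2 * Real.exp 1 * m * C ^ m with hD
  have hD0 : 0 ≤ D := by positivity
  have hmeas : MeasurableSet {x : ℝ | 1 < |f x|} := measurableSet_lt measurable_const hf.abs
  -- This choice makes the ratio `ε D` of the dominating geometric series smaller than `1`.
  set ε : ℝ := 1 / (D + 1) with hεdef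
  have hε : 0 < ε := by positivity
  have hr : ε * D < 1 := by rw [hεdef, one_div_mul_eq_div, div_lt_one (by positivity)]; linarith
  refine ⟨ε, hε, ?_⟩
  have hterm : ∀ k : ℕ, ∫⁻ x in {x : ℝ | 1 < |f x|},
      ENNReal.ofReal ((ε * |f x| ^ m) ^ k / (k.factorial : ℝ))
      ≤ ENNReal.ofReal ((n.factorial * D ^ n) * (ε * D) ^ k) := by
    intro k
    calc _ ≤ ∫⁻ x in {x : ℝ | 1 < |f x|}, ENNReal.ofReal (ε ^ k / (k.factorial : ℝ)) *
          ENNReal.ofReal (|f x| ^ (m * ((k + n : ℕ) : ℝ))) := by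
          refine setLIntegral_mono' hmeas fun x hx => ?_
          have hx : 1 < |f x| := hx
          rw [← ENNReal.ofReal_mul (by positivity)]
          refine ENNReal.ofReal_le_ofReal ?_
          rw [mul_pow, mul_div_right_comm, ← Real.rpow_natCast (|f x| ^ m) k,
            ← Real.rpow_mul (abs_nonneg _)]
          gcongr
          · exact hx.le
          · simp
      _ = ENNReal.ofReal (ε ^ k / (k.factorial : ℝ)) * ∫⁻ x in {x : ℝ | 1 < |f x|},
          ENNReal.ofReal (|f x| ^ (m * ((k + n : ℕ) : ℝ))) :=
          lintegral_const_mul _ (by fun_prop)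
      _ ≤ ENNReal.ofReal (ε ^ k / (k.factorial : ℝ)) *
          ENNReal.ofReal ((C * (m * (k + n : ℕ)) ^ (1 / m)) ^ (m * ((k + n : ℕ) : ℝ))) := by
          gcongr
          refine (setLIntegral_le_lintegral _ _).trans (h _ ?_)
          push_cast
          nlinarith [mul_nonneg hm.le (Nat.cast_nonneg (α := ℝ) k)]
      _ ≤ _ := by
          rw [← ENNReal.ofReal_mul (by positivity)]
          exact ENNReal.ofReal_le_ofReal (term_bound C m ε hC hm hε.le k n)
  calc _ = ∫⁻ x in {x : ℝ | 1 < |f x|},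
        ∑' k : ℕ, ENNReal.ofReal ((ε * |f x| ^ m) ^ k / (k.factorial : ℝ)) := by
        refine lintegral_congr fun x => ofReal_exp_eq_tsum _ (by positivity)
    _ = ∑' k : ℕ, ∫⁻ x in {x : ℝ | 1 < |f x|},
        ENNReal.ofReal ((ε * |f x| ^ m) ^ k / (k.factorial : ℝ)) :=
        lintegral_tsum fun k => by fun_prop
    _ ≤ ∑' k : ℕ, ENNReal.ofReal ((n.factorial * D ^ n) * (ε * D) ^ k) :=
        ENNReal.tsum_le_tsum hterm
    _ < ⊤ := by
        rw [← ENNReal.ofReal_tsum_of_nonneg (fun k => by positivity)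
          ((summable_geometric_of_lt_one (by positivity) hr).mul_left _)]
        exact ENNReal.ofReal_lt_top

/-- Splitting the `p`-th moment over `{|f| ≤ 1}` and `{|f| > 1}` and taking `p`-th roots. -/
lemma weighted_eLpNorm_le (α m ε p : ℝ) (hα : 1 ≤ α) (hm : 0 < m) (hε : 0 < ε) (hp : α ≤ p)
    (f : ℝ → ℝ) (hf : Measurable f) :
    ENNReal.ofReal (p ^ (-(1 / m))) * eLpNorm f (ENNReal.ofReal p) volume
      ≤ (1 + ∫⁻ x in {x : ℝ | |f x| ≤ 1}, (‖f x‖₊ : ENNReal) ^ α) +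
        ENNReal.ofReal ((1 / (m * ε)) ^ (1 / m)) * (1 +
          ∫⁻ x in {x : ℝ | 1 < |f x|}, ENNReal.ofReal (Real.exp (ε * |f x| ^ m))) := by
  have hp1 : 1 ≤ p := hα.trans hp
  have hp0 : 0 < p := by linarith
  set A := ∫⁻ x in {x : ℝ | |f x| ≤ 1}, (‖f x‖₊ : ENNReal) ^ α with hA
  set B := ∫⁻ x in {x : ℝ | 1 < |f x|}, ENNReal.ofReal (Real.exp (ε * |f x| ^ m)) with hB
  have hm1 : MeasurableSet {x : ℝ | |f x| ≤ 1} := measurableSet_le hf.abs measurable_const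
  have hm2 : MeasurableSet {x : ℝ | 1 < |f x|} := measurableSet_lt measurable_const hf.abs
  have hc : {x : ℝ | |f x| ≤ 1}ᶜ = {x : ℝ | 1 < |f x|} := by ext x; simp
  have hI : ∫⁻ x, ENNReal.ofReal (|f x| ^ p)
      ≤ A + ENNReal.ofReal ((p / (m * ε)) ^ (p / m)) * B := by
    rw [← lintegral_add_compl _ hm1, hc]
    refine add_le_add ?_ ?_
    · refine setLIntegral_mono' hm1 fun x hx => ?_
      have hx : |f x| ≤ 1 := hx
      change _ ≤ (‖f x‖ₑ : ENNReal) ^ α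
      rw [enorm_rpow_eq_ofReal _ _ (by linarith)]
      exact ENNReal.ofReal_le_ofReal
        (Real.rpow_le_rpow_of_exponent_ge' (abs_nonneg _) hx (by linarith) hp)
    · rw [hB, ← lintegral_const_mul _ (by fun_prop)]
      refine setLIntegral_mono' hm2 fun x hx => ?_
      have hx : 1 < |f x| := hx
      rw [← ENNReal.ofReal_mul (by positivity)]
      exact ENNReal.ofReal_le_ofReal
        (rpow_le_const_mul_exp _ _ _ _ (by linarith) hp0 hm hε)
  have hq0 : 0 ≤ 1 / p := by positivity
  have hq1 : 1 / p ≤ 1 := by rw [div_le_one hp0]; exact hp1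
  have hN : eLpNorm f (ENNReal.ofReal p) volume
      ≤ (1 + A) + ENNReal.ofReal ((p / (m * ε)) ^ (1 / m)) * (1 + B) := by
    rw [eLpNorm_ofReal_eq f p hp0]
    calc _ ≤ (A + ENNReal.ofReal ((p / (m * ε)) ^ (p / m)) * B) ^ (1 / p) :=
          ENNReal.rpow_le_rpow hI hq0
      _ ≤ A ^ (1 / p) + (ENNReal.ofReal ((p / (m * ε)) ^ (p / m)) * B) ^ (1 / p) :=
          ENNReal.rpow_add_le_add_rpow _ _ hq0 hq1
      _ = A ^ (1 / p) + ENNReal.ofReal ((p / (m * ε)) ^ (1 / m)) * B ^ (1 / p) := by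
          rw [ENNReal.mul_rpow_of_nonneg _ _ hq0,
            ENNReal.ofReal_rpow_of_nonneg (by positivity) hq0, ← Real.rpow_mul (by positivity)]
          congr 4
          field_simp
      _ ≤ _ := by
          gcongr <;> exact rpow_one_div_le_one_add _ p hp1
  calc _ ≤ ENNReal.ofReal (p ^ (-(1 / m))) *
        ((1 + A) + ENNReal.ofReal ((p / (m * ε)) ^ (1 / m)) * (1 + B)) := by gcongr
    _ = ENNReal.ofReal (p ^ (-(1 / m))) * (1 + A) +
        ENNReal.ofReal ((1 / (m * ε)) ^ (1 / m)) * (1 + B) := by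
        rw [mul_add, ← mul_assoc, ← ENNReal.ofReal_mul (by positivity)]
        congr 3
        rw [div_eq_mul_one_div p, Real.mul_rpow hp0.le (by positivity), ← mul_assoc,
          ← Real.rpow_add hp0]
        simp
    _ ≤ _ := by
        gcongr
        refine mul_le_of_le_one_left' ?_
        rw [ENNReal.ofReal_le_one]
        exact Real.rpow_le_one_of_one_le_of_nonpos hp1 (by simp [hm.le])

/-- Let `α ≥ 1`, `m > 0`, and let `f : ℝ → ℝ` be measurable. Then
`sup_{p ≥ α} p^{−1/m}·‖f‖_p < ∞` if and only if there exists `ε > 0` such that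
`∫_{{|f| ≤ 1}} |f|^α dx < ∞` and `∫_{{|f| > 1}} exp(ε·|f|^m) dx < ∞`. -/
theorem stmt_5
    (α m : ℝ) (hα : 1 ≤ α) (hm : 0 < m)
    (f : ℝ → ℝ) (hf : Measurable f) :
    (⨆ p : {p : ℝ // α ≤ p},
        ENNReal.ofReal (p.1 ^ (-(1 / m))) * eLpNorm f (ENNReal.ofReal p.1) volume) < ⊤ ↔
    ∃ ε > (0 : ℝ),
      (∫⁻ x in {x : ℝ | |f x| ≤ 1}, (‖f x‖₊ : ENNReal) ^ α) < ⊤ ∧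
      (∫⁻ x in {x : ℝ | 1 < |f x|}, ENNReal.ofReal (Real.exp (ε * |f x| ^ m))) < ⊤ := by
  constructor
  · intro h
    set S := ⨆ p : {p : ℝ // α ≤ p},
        ENNReal.ofReal (p.1 ^ (-(1 / m))) * eLpNorm f (ENNReal.ofReal p.1) volume with hS
    have hC : 0 ≤ S.toReal := ENNReal.toReal_nonneg
    have hmom : ∀ p, α ≤ p → ∫⁻ x, ENNReal.ofReal (|f x| ^ p)
        ≤ ENNReal.ofReal ((S.toReal * p ^ (1 / m)) ^ p) := by
      intro p hp
      have hp0 : 0 < p := by linarith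
      have h1 : ENNReal.ofReal (p ^ (-(1 / m))) * eLpNorm f (ENNReal.ofReal p) volume ≤ S :=
        le_iSup (fun p : {p : ℝ // α ≤ p} =>
          ENNReal.ofReal (p.1 ^ (-(1 / m))) * eLpNorm f (ENNReal.ofReal p.1) volume) ⟨p, hp⟩
      have h2 : eLpNorm f (ENNReal.ofReal p) volume
          ≤ ENNReal.ofReal (S.toReal * p ^ (1 / m)) := by
        calc _ = ENNReal.ofReal (p ^ (1 / m)) *
              (ENNReal.ofReal (p ^ (-(1 / m))) * eLpNorm f (ENNReal.ofReal p) volume) := by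
              rw [← mul_assoc, ← ENNReal.ofReal_mul (by positivity), ← Real.rpow_add hp0]
              simp
          _ ≤ ENNReal.ofReal (p ^ (1 / m)) * S := by gcongr
          _ = _ := by
              rw [mul_comm, ENNReal.ofReal_mul hC, ENNReal.ofReal_toReal h.ne]
      rw [eLpNorm_ofReal_eq f p hp0, one_div, ENNReal.rpow_inv_le_iff hp0,
        ENNReal.ofReal_rpow_of_nonneg (by positivity) hp0.le] at h2
      exact h2
    obtain ⟨ε, hε, hexp⟩ := exists_exp_integral_lt_top α m S.toReal hm hC f hf hmom
    refine ⟨ε, hε, ?_, hexp⟩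
    change (∫⁻ x in {x : ℝ | |f x| ≤ 1}, (‖f x‖ₑ : ENNReal) ^ α) < ⊤
    simp_rw [enorm_rpow_eq_ofReal _ α (by linarith : 0 ≤ α)]
    exact ((setLIntegral_le_lintegral _ _).trans (hmom α le_rfl)).trans_lt ENNReal.ofReal_lt_top
  · rintro ⟨ε, hε, hA, hB⟩
    refine (iSup_le fun p : {p : ℝ // α ≤ p} => weighted_eLpNorm_le α m ε p.1 hα hm hε p.2 f hf).trans_lt ?_
    exact ENNReal.add_lt_top.2 ⟨ENNReal.add_lt_top.2 ⟨ENNReal.one_lt_top, hA⟩,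
      ENNReal.mul_lt_top ENNReal.ofReal_lt_top (ENNReal.add_lt_top.2 ⟨ENNReal.one_lt_top, hB⟩)⟩
end

section
/- For all x, t ∈ ℝ one has 0 ≤ Γ(x, t) ≤ √2·B·exp(−2^{−3/2}·|t − x|/B). -/
open Real Set MeasureTheory

/-! Since `2^(-1/2) ≤ 1`, one has the cruder bound `0 < ρ ≤ B`, which already suffices. It gives
`√(ρ(x)ρ(t)) ≤ B ≤ √2·B`, and `1/ρ ≥ 1/B` gives `∫ 1/ρ ≥ |t - x|/B`; the exponent then compares
because `2^(-3/2) ≤ 1/2`. -/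

/-- Let `B > 0`, `d : ℝ → (0,∞)` with `d ≤ B`, and
`2^{−3/2}·d ≤ ρ ≤ 2^{−1/2}·d`. For the Green-type kernel
`Γ(x,t) = √(ρ(x)ρ(t))·exp(−(1/2)|∫_x^t dξ/ρ(ξ)|)` (the integral of the nonnegative
function `1/ρ` taken in `[0,∞]`, with `exp(−∞) = 0`), one has
`0 ≤ Γ(x,t) ≤ √2·B·exp(−2^{−3/2}|t−x|/B)` for all `x, t`. -/
theorem stmt_9
    (B : ℝ) (hB : 0 < B)
    (d : ℝ → ℝ) (hd_pos : ∀ ξ, 0 < d ξ) (hdB : ∀ ξ, d ξ ≤ B)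
    (ρ : ℝ → ℝ) (hρ_meas : Measurable ρ)
    (hρ_low : ∀ ξ, (2 : ℝ) ^ (-(3 : ℝ) / 2) * d ξ ≤ ρ ξ)
    (hρ_up : ∀ ξ, ρ ξ ≤ (2 : ℝ) ^ (-(1 : ℝ) / 2) * d ξ)
    (Γ : ℝ → ℝ → ℝ)
    (hΓ : ∀ x t : ℝ, Γ x t =
      if (∫⁻ ξ in Set.uIoc x t, ENNReal.ofReal (1 / ρ ξ)) = ⊤ then 0
      else Real.sqrt (ρ x * ρ t) *
        Real.exp (-(1 / 2) * (∫⁻ ξ in Set.uIoc x t, ENNReal.ofReal (1 / ρ ξ)).toReal)) :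
    ∀ x t : ℝ, 0 ≤ Γ x t ∧
      Γ x t ≤ Real.sqrt 2 * B * Real.exp (-((2 : ℝ) ^ (-(3 : ℝ) / 2)) * |t - x| / B) := by
  have hρB : ∀ ξ, ρ ξ ≤ B := fun ξ => by
    have h1 : (2 : ℝ) ^ (-(1 : ℝ) / 2) ≤ 1 :=
      Real.rpow_le_one_of_one_le_of_nonpos (by norm_num) (by norm_num)
    nlinarith [hρ_up ξ, hdB ξ, hd_pos ξ]
  have hρ_pos : ∀ ξ, 0 < ρ ξ := fun ξ =>
    lt_of_lt_of_le (mul_pos (by positivity) (hd_pos ξ)) (hρ_low ξ)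
  have hhalf : (2 : ℝ) ^ (-(3 : ℝ) / 2) ≤ 1 / 2 := by
    calc (2 : ℝ) ^ (-(3 : ℝ) / 2) ≤ (2 : ℝ) ^ (-1 : ℝ) :=
          Real.rpow_le_rpow_of_exponent_le (by norm_num) (by norm_num)
      _ = 1 / 2 := by rw [Real.rpow_neg_one]; norm_num
  intro x t
  rw [hΓ]
  split_ifs with h
  · exact ⟨le_rfl, by positivity⟩
  refine ⟨by positivity, ?_⟩
  have hint : |t - x| / B ≤ (∫⁻ ξ in Set.uIoc x t, ENNReal.ofReal (1 / ρ ξ)).toReal := by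
    rw [← ENNReal.ofReal_le_iff_le_toReal h]
    calc ENNReal.ofReal (|t - x| / B)
        = ∫⁻ _ in Set.uIoc x t, ENNReal.ofReal (1 / B) := by
          rw [setLIntegral_const, Real.volume_uIoc, ← ENNReal.ofReal_mul (by positivity)]
          congr 1
          ring
      _ ≤ ∫⁻ ξ in Set.uIoc x t, ENNReal.ofReal (1 / ρ ξ) :=
          lintegral_mono fun ξ => ENNReal.ofReal_le_ofReal
            (one_div_le_one_div_of_le (hρ_pos ξ) (hρB ξ))
  have hsqrt : Real.sqrt (ρ x * ρ t) ≤ Real.sqrt 2 * B := by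
    calc Real.sqrt (ρ x * ρ t) ≤ B := by
          rw [Real.sqrt_le_left hB.le, sq]
          exact mul_le_mul (hρB x) (hρB t) (hρ_pos t).le hB.le
      _ ≤ Real.sqrt 2 * B :=
          le_mul_of_one_le_left hB.le (Real.one_le_sqrt.2 (by norm_num))
  refine mul_le_mul hsqrt (Real.exp_le_exp.2 ?_) (Real.exp_pos _).le (by positivity)
  rw [mul_div_assoc]
  have h0 : 0 ≤ |t - x| / B := by positivity
  nlinarith [mul_le_mul_of_nonneg_right hhalf h0]
end

section
/- Let β > 1. Then lim_{x → ∞} (x·(log x)²)^{1/β} · ∫_2^∞ exp(−|x − t|)·(t·(log t)²)^{−1/β} dt = 2. -/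
/-!
Write `f t = t (log t)²` and `a = 1/β ∈ (0, 1)`. Substituting `t = x + u` turns the expression into
`∫ exp (-|u|) (f x / f (x + u))^a du` over `u > 2 - x`. For fixed `u` the ratio `f x / f (x + u)`
tends to `1`, because `x / (x + u) → 1` and `log (x + u) - log x → 0`. Moreover, for `x, t ≥ 2`,
`f x ≤ (1 + 2|x - t|)³ f t`, so the integrand is dominated by a multiple of `exp (-|u| / 2)`.
Dominated convergence gives the limit `∫ exp (-|u|) du = 2`.
-/

open Real Set MeasureTheory Filter

lemma mul_log_sq_pos {t : ℝ} (ht : 2 ≤ t) : 0 < t * Real.log t ^ 2 := by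
  have : 0 < Real.log t := Real.log_pos (by linarith)
  positivity

/-- Translating by `u` changes `t (log t)²` by at most a polynomial factor in `|u|`, since both
`t` and `log t` are bounded below on `[2, ∞)`. -/
lemma mul_log_sq_le {x u : ℝ} (hx : 2 ≤ x) (ht : 2 ≤ x + u) :
    x * Real.log x ^ 2 ≤ (1 + 2 * |u|) ^ 3 * ((x + u) * Real.log (x + u) ^ 2) := by
  have hu : 0 ≤ |u| := abs_nonneg u
  have h1 : x ≤ (1 + |u|) * (x + u) := by nlinarith [neg_abs_le u]
  have hl2 : (1 / 2 : ℝ) ≤ Real.log (x + u) := by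
    have := Real.log_le_log (by norm_num) ht
    linarith [Real.log_two_gt_d9]
  have hl : 0 ≤ Real.log x := Real.log_nonneg (by linarith)
  have h2 : Real.log x ≤ (1 + 2 * |u|) * Real.log (x + u) := by
    have h3 := Real.log_le_log (by linarith) h1
    rw [Real.log_mul (by positivity) (by linarith)] at h3
    have h4 := Real.log_le_sub_one_of_pos (show 0 < 1 + |u| by positivity)
    nlinarith
  calc x * Real.log x ^ 2
      ≤ ((1 + 2 * |u|) * (x + u)) * ((1 + 2 * |u|) * Real.log (x + u)) ^ 2 := by
        gcongr
        nlinarith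
    _ = _ := by ring

lemma tendsto_mul_log_sq_ratio (u : ℝ) :
    Tendsto (fun x : ℝ => x * Real.log x ^ 2 / ((x + u) * Real.log (x + u) ^ 2))
      atTop (nhds 1) := by
  have h1 : Tendsto (fun x : ℝ => (x + u) / x) atTop (nhds 1) := by
    have : Tendsto (fun x : ℝ => 1 + u / x) atTop (nhds (1 + 0)) :=
      tendsto_const_nhds.add (tendsto_const_nhds.div_atTop tendsto_id)
    rw [add_zero] at this
    refine this.congr' ?_
    filter_upwards [eventually_gt_atTop 0] with x hx
    field_simp
  have h2 : Tendsto (fun x : ℝ => Real.log (x + u) / Real.log x) atTop (nhds 1) := by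
    have : Tendsto (fun x : ℝ => 1 + (Real.log (x + u) - Real.log x) / Real.log x) atTop
        (nhds (1 + 0)) :=
      tendsto_const_nhds.add ((Real.tendsto_log_comp_add_sub_log u).div_atTop Real.tendsto_log_atTop)
    rw [add_zero] at this
    refine this.congr' ?_
    filter_upwards [eventually_gt_atTop 1] with x hx
    have := Real.log_pos hx
    field_simp
    ring
  have h3 := (h1.mul (h2.pow 2)).inv₀ (by norm_num)
  norm_num at h3
  refine h3.congr fun x => ?_
  simp only [div_eq_mul_inv, mul_inv, inv_inv, mul_pow, inv_pow]
  ring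

lemma integrable_exp_neg_mul_abs' {c : ℝ} (hc : 0 < c) :
    Integrable fun u : ℝ => Real.exp (-(c * |u|)) := by
  -- A Bochner integral with a nonzero value is the integral of an integrable function.
  refine Integrable.of_integral_ne_zero ?_
  have h := integral_exp_mul_Ioi (neg_lt_zero.2 hc) 0
  simp only [neg_mul] at h
  rw [integral_comp_abs (f := fun u => Real.exp (-(c * u))), h]
  simp [hc.ne']

/-- Let `β > 1`. Then
`lim_{x → ∞} (x·(log x)²)^{1/β} · ∫_2^∞ exp(−|x − t|)·(t·(log t)²)^{−1/β} dt = 2`. -/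
theorem stmt_17
    (β : ℝ) (hβ : 1 < β) :
    Filter.Tendsto
      (fun x : ℝ => (x * Real.log x ^ 2) ^ (1 / β) *
        ∫ t in Set.Ioi (2 : ℝ), Real.exp (-|x - t|) * (t * Real.log t ^ 2) ^ (-(1 / β)))
      Filter.atTop (nhds 2) := by
  have ha0 : 0 < 1 / β := by positivity
  have ha1 : 1 / β ≤ 1 := by rw [div_le_one (by linarith)]; exact hβ.le
  generalize 1 / β = a at ha0 ha1
  -- `F x` is the integrand after the substitution `t = x + u`, extended by zero to all of `ℝ`.
  set F : ℝ → ℝ → ℝ := fun x u => (Set.Ioi (2 - x)).indicator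
    (fun u => (x * Real.log x ^ 2) ^ a *
      (Real.exp (-|u|) * ((x + u) * Real.log (x + u) ^ 2) ^ (-a))) u with hF
  have hsub : ∀ x : ℝ, (x * Real.log x ^ 2) ^ a *
      (∫ t in Set.Ioi (2 : ℝ), Real.exp (-|x - t|) * (t * Real.log t ^ 2) ^ (-a))
      = ∫ u, F x u := by
    intro x
    rw [← integral_const_mul, ← integral_indicator measurableSet_Ioi,
      ← integral_add_left_eq_self _ x]
    congr 1 with u
    simp only [hF, Set.indicator, Set.mem_Ioi, sub_lt_iff_lt_add', sub_add_cancel_left, abs_neg]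
  have hratio : ∀ x u : ℝ, 2 ≤ x → 2 - x < u → F x u = Real.exp (-|u|) *
      (x * Real.log x ^ 2 / ((x + u) * Real.log (x + u) ^ 2)) ^ a := by
    intro x u hx hu
    have h1 := mul_log_sq_pos hx
    have h2 := mul_log_sq_pos (show 2 ≤ x + u by linarith)
    simp only [hF]
    rw [Set.indicator_of_mem (by exact hu), Real.div_rpow h1.le h2.le, Real.rpow_neg h2.le]
    ring
  have hval : ∫ u : ℝ, Real.exp (-|u|) = 2 := by
    rw [integral_comp_abs (f := fun u => Real.exp (-u)), integral_exp_neg_Ioi_zero, mul_one]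
  simp_rw [hsub]
  rw [← hval]
  refine tendsto_integral_filter_of_dominated_convergence
    (fun u => 1728 * Real.exp (-(1 / 2 * |u|))) ?_ ?_ ?_ ?_
  · refine Eventually.of_forall fun x => Measurable.aestronglyMeasurable ?_
    exact Measurable.indicator (by fun_prop) measurableSet_Ioi
  · filter_upwards [eventually_ge_atTop 2] with x hx
    refine Eventually.of_forall fun u => ?_
    by_cases hu : 2 - x < u
    · have h1 := mul_log_sq_pos hx
      have h2 := mul_log_sq_pos (show 2 ≤ x + u by linarith)
      have h3 := abs_nonneg u
      rw [hratio x u hx hu, Real.norm_of_nonneg (by positivity)]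
      calc Real.exp (-|u|) * (x * Real.log x ^ 2 / ((x + u) * Real.log (x + u) ^ 2)) ^ a
          ≤ Real.exp (-|u|) * ((1 + 2 * |u|) ^ 3) ^ a := by
            gcongr
            rw [div_le_iff₀ h2]
            exact mul_log_sq_le hx (by linarith)
        _ ≤ Real.exp (-|u|) * (1 + 2 * |u|) ^ 3 := by
            gcongr
            exact Real.rpow_le_self_of_one_le (one_le_pow₀ (by linarith)) ha1
        -- A fixed multiple of `exp (|u| / 2)` absorbs the cubic factor.
        _ ≤ Real.exp (-|u|) * (12 * Real.exp (|u| / 6)) ^ 3 := by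
            gcongr
            linarith [Real.add_one_le_exp (|u| / 6)]
        _ = 1728 * Real.exp (-(1 / 2 * |u|)) := by
            rw [mul_pow, ← Real.exp_nat_mul, mul_left_comm, ← Real.exp_add]
            norm_num
            ring
    · simp only [hF]
      rw [Set.indicator_of_notMem (by exact hu), norm_zero]
      positivity
  · exact (integrable_exp_neg_mul_abs' (by norm_num)).const_mul _
  · refine Eventually.of_forall fun u => ?_
    have h := ((tendsto_mul_log_sq_ratio u).rpow_const (p := a) (Or.inl one_ne_zero)).const_mul
      (Real.exp (-|u|))
    rw [Real.one_rpow, mul_one] at h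
    refine h.congr' ?_
    filter_upwards [eventually_ge_atTop 2, eventually_gt_atTop (2 - u)] with x hx hxu
    exact (hratio x u hx (by linarith)).symm
end

section
/- (Theorem 3) Let A > 0, β > 1 and δ ∈ (0, β − 1). Let Γ : ℝ × ℝ → [0, ∞) be measurable with Γ(x, t) ≥ 2^{−3/2}·A·exp(−√2·|x − t|/A) for all x, t ∈ ℝ. Define g : ℝ → ℝ by g(x) = (x·(log x)²)^{−1/β} for x ≥ 2 and g(x) = 0 for x < 2, so that g ∈ L^β(ℝ). Then the function y(x) := ∫_ℝ Γ(x, t)·g(t) dt satisfies ∫_ℝ y(x)^{β−δ} dx = ∞; in particular y ∉ L^{β−δ}(ℝ), so the solution map g ↦ y does not map L^β(ℝ) into L^{β−δ}(ℝ). -/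
/-!
The function `g ^ β = 1 / (x log² x)` on `[2, ∞)` has the bounded antiderivative `-1 / log x`,
so `g` lies in `L^β`. For the divergence, put `c = 2^(-3/2) A exp (-√2 / A)`: the kernel is at
least `c` on `|x - t| ≤ 1`, and `g` is decreasing on `[2, ∞)`, so `y x ≥ c * g x` for `x ≥ 3` by
integrating over `t ∈ [x - 1, x]` only. With `q = (β - δ) / β < 1` this gives
`y x ^ (β - δ) ≥ c ^ (β - δ) * (x log² x) ^ (-q)`. Since the logarithm grows more slowly than any
power, `(x log² x) ^ (-q)` dominates a multiple of `1 / x`, which is not integrable at infinity.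
-/

open Real Set MeasureTheory

/-- The logarithmic factor is absorbed by the room between `q` and `1`: the power is chosen so that
`(x * (x ^ ε) ^ 2) ^ q = x`. -/
lemma exists_mul_inv_le_rpow_neg {q : ℝ} (hq0 : 0 < q) (hq1 : q < 1) :
    ∃ C : ℝ, 0 < C ∧ ∀ x : ℝ, 2 ≤ x → C * x⁻¹ ≤ (x * Real.log x ^ 2) ^ (-q) := by
  obtain ⟨ε, hε⟩ : ∃ ε : ℝ, ε = (1 / q - 1) / 2 := ⟨_, rfl⟩
  have hε0 : 0 < ε := by
    have : 1 < 1 / q := by rw [lt_div_iff₀ hq0]; linarith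
    rw [hε]; linarith
  have hεq : (1 + ε * 2) * q = 1 := by rw [hε]; field_simp; ring
  refine ⟨(ε ^ 2) ^ q, by positivity, fun x hx => ?_⟩
  have hx0 : 0 < x := by linarith
  have hl : 0 < Real.log x := Real.log_pos (by linarith)
  have h1 : Real.log x ≤ x ^ ε / ε := Real.log_le_rpow_div hx0.le hε0
  have h2 : x * Real.log x ^ 2 ≤ x ^ (1 + ε * 2) / ε ^ 2 := by
    calc x * Real.log x ^ 2 ≤ x * (x ^ ε / ε) ^ 2 := by gcongr
      _ = x ^ (1 + ε * 2) / ε ^ 2 := by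
        rw [Real.rpow_add hx0, Real.rpow_one, Real.rpow_mul hx0.le, div_pow, Real.rpow_two]
        ring
  calc (ε ^ 2) ^ q * x⁻¹ = (x ^ (1 + ε * 2) / ε ^ 2) ^ (-q) := by
        rw [Real.rpow_neg (by positivity), Real.div_rpow (by positivity) (by positivity),
          ← Real.rpow_mul hx0.le, hεq, Real.rpow_one, inv_div]
        rfl
    _ ≤ _ := Real.rpow_le_rpow_of_nonpos (by positivity) h2 (by linarith)

lemma integrableOn_inv_mul_log_sq :
    IntegrableOn (fun x : ℝ => (x * Real.log x ^ 2)⁻¹) (Ioi 2) := by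
  have hd : ∀ x : ℝ, 2 ≤ x →
      HasDerivAt (fun x => -(Real.log x)⁻¹) ((x * Real.log x ^ 2)⁻¹) x := by
    intro x hx
    have hl : 0 < Real.log x := Real.log_pos (by linarith)
    have hx0 : 0 < x := by linarith
    refine ((Real.hasDerivAt_log hx0.ne').inv hl.ne').neg.congr_deriv ?_
    rw [mul_inv, neg_div, neg_neg, div_eq_mul_inv]
  refine integrableOn_Ioi_deriv_of_nonneg (l := 0)
    (hd 2 le_rfl).continuousAt.continuousWithinAt (fun x hx => hd x (le_of_lt hx)) ?_ ?_
  · intro x hx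
    have : (2 : ℝ) < x := hx
    positivity
  · simpa using (tendsto_inv_atTop_zero.comp Real.tendsto_log_atTop).neg

lemma lintegral_Ioi_const_mul_inv {K : ℝ} (hK : 0 < K) :
    ∫⁻ x in Ioi (3 : ℝ), ENNReal.ofReal (K * x⁻¹) = ⊤ := by
  by_contra h
  have hm : Measurable fun x : ℝ => K * x⁻¹ := by fun_prop
  have hi : IntegrableOn (fun x : ℝ => K * x⁻¹) (Ioi 3) := by
    refine (lintegral_ofReal_ne_top_iff_integrable hm.aestronglyMeasurable ?_).1 h
    filter_upwards [ae_restrict_mem measurableSet_Ioi] with x hx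
    have : (3 : ℝ) < x := hx
    simp only [Pi.zero_apply]
    positivity
  have h2 : IntegrableOn (fun x : ℝ => K⁻¹ * (K * x⁻¹)) (Ioi 3) := Integrable.const_mul hi K⁻¹
  simp only [inv_mul_cancel_left₀ hK.ne'] at h2
  exact not_integrableOn_Ioi_inv h2

/-- Theorem 3: Let `A > 0`, `β > 1`, `δ ∈ (0, β − 1)`, and let
`Γ : ℝ × ℝ → [0,∞)` be measurable with `Γ(x,t) ≥ 2^{−3/2}·A·exp(−√2·|x−t|/A)`. With
`g(x) = (x·(log x)²)^{−1/β}` for `x ≥ 2` and `g(x) = 0` otherwise (so `g ∈ L^β(ℝ)`),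
the function `y(x) = ∫_ℝ Γ(x,t)·g(t) dt` (valued in `[0,∞]`) satisfies
`∫_ℝ y(x)^{β−δ} dx = ∞`; in particular `y ∉ L^{β−δ}(ℝ)`. -/
theorem stmt_18
    (A : ℝ) (hA : 0 < A)
    (β δ : ℝ) (hβ : 1 < β) (hδ : 0 < δ) (hδβ : δ < β - 1)
    (Γ : ℝ → ℝ → ℝ) (hΓ_meas : Measurable (Function.uncurry Γ))
    (hΓ_nonneg : ∀ x t : ℝ, 0 ≤ Γ x t)
    (hΓ_low : ∀ x t : ℝ,
      (2 : ℝ) ^ (-(3 : ℝ) / 2) * A * Real.exp (-Real.sqrt 2 * |x - t| / A) ≤ Γ x t)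
    (g : ℝ → ℝ)
    (hg : ∀ x : ℝ, g x = if 2 ≤ x then (x * Real.log x ^ 2) ^ (-(1 / β)) else 0) :
    (∫⁻ x : ℝ, ENNReal.ofReal (g x) ^ β) < ⊤ ∧
    (∫⁻ x : ℝ, (∫⁻ t : ℝ, ENNReal.ofReal (Γ x t * g t)) ^ (β - δ)) = ⊤ := by
  constructor
  · have h1 : ∀ x : ℝ, ENNReal.ofReal (g x) ^ β
        = (Ici (2 : ℝ)).indicator (fun x => ENNReal.ofReal (x * Real.log x ^ 2)⁻¹) x := by
      intro x
      by_cases hx : 2 ≤ x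
      · have hp : 0 ≤ x * Real.log x ^ 2 := by positivity
        rw [hg, if_pos hx, indicator_of_mem (mem_Ici.2 hx),
          ENNReal.ofReal_rpow_of_nonneg (by positivity) (by linarith), ← Real.rpow_mul hp,
          show -(1 / β) * β = -1 by field_simp, Real.rpow_neg_one]
      · rw [hg, if_neg hx, indicator_of_notMem (by simpa using hx)]
        simp [show 0 < β by linarith]
    simp only [h1]
    rw [lintegral_indicator measurableSet_Ici, setLIntegral_congr Ioi_ae_eq_Ici.symm]
    exact integrableOn_inv_mul_log_sq.lintegral_lt_top
  · have hp0 : 0 < β - δ := by linarith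
    have hβ0 : 0 < β := by linarith
    obtain ⟨C, hC, hCle⟩ := exists_mul_inv_le_rpow_neg (q := (β - δ) / β) (by positivity)
      (by rw [div_lt_one hβ0]; linarith)
    obtain ⟨c, hc⟩ : ∃ c : ℝ, c = (2 : ℝ) ^ (-(3 : ℝ) / 2) * A * Real.exp (-Real.sqrt 2 * 1 / A) :=
      ⟨_, rfl⟩
    have hc0 : 0 < c := by rw [hc]; positivity
    refine top_le_iff.1 ?_
    refine (lintegral_Ioi_const_mul_inv (K := c ^ (β - δ) * C) (by positivity)).ge.trans ?_
    refine le_trans (setLIntegral_mono' measurableSet_Ioi fun x hx => ?_)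
      (setLIntegral_le_lintegral (Ioi 3) _)
    have hx3 : (3 : ℝ) < x := hx
    have hgx : g x = (x * Real.log x ^ 2) ^ (-(1 / β)) := by rw [hg, if_pos (by linarith)]
    have hX : 0 ≤ x * Real.log x ^ 2 := by positivity
    have hgx0 : 0 ≤ g x := by rw [hgx]; positivity
    have hy : ENNReal.ofReal (c * g x) ≤ ∫⁻ t : ℝ, ENNReal.ofReal (Γ x t * g t) := by
      calc ENNReal.ofReal (c * g x)
          = ∫⁻ _ in Icc (x - 1) x, ENNReal.ofReal (c * g x) := by simp
        _ ≤ ∫⁻ t in Icc (x - 1) x, ENNReal.ofReal (Γ x t * g t) := by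
          refine setLIntegral_mono' measurableSet_Icc fun t ht => ENNReal.ofReal_le_ofReal ?_
          have ht2 : 2 ≤ t := by linarith [ht.1]
          have hlt : 0 < Real.log t := Real.log_pos (by linarith)
          have hΓc : c ≤ Γ x t := by
            refine le_trans ?_ (hΓ_low x t)
            have : |x - t| ≤ 1 := abs_le.2 ⟨by linarith [ht.2], by linarith [ht.1]⟩
            rw [hc, neg_mul, neg_mul]
            gcongr
          have hgt : g x ≤ g t := by
            rw [hgx, hg, if_pos ht2]
            refine Real.rpow_le_rpow_of_nonpos (by positivity) ?_
              (by simpa using hβ0.le)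
            have := ht.2
            gcongr
          exact mul_le_mul hΓc hgt hgx0 (hΓ_nonneg x t)
        _ ≤ _ := setLIntegral_le_lintegral _ _
    calc ENNReal.ofReal (c ^ (β - δ) * C * x⁻¹)
        ≤ ENNReal.ofReal ((c * g x) ^ (β - δ)) := by
          refine ENNReal.ofReal_le_ofReal ?_
          rw [Real.mul_rpow hc0.le hgx0, hgx, ← Real.rpow_mul hX, mul_assoc,
            show -(1 / β) * (β - δ) = -((β - δ) / β) by ring]
          have := hCle x (by linarith)
          gcongr
      _ = ENNReal.ofReal (c * g x) ^ (β - δ) :=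
          (ENNReal.ofReal_rpow_of_nonneg (by positivity) hp0.le).symm
      _ ≤ _ := ENNReal.rpow_le_rpow hy hp0.le
end
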